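/- arXiv:1806.11456 — 2 statements merged into one kernel-verified Lean document; each statement's English description precedes it below -/
import Mathlib

section
/- Conservative form of the transformed divergence: let Φ : ℝ³ → ℝ³ be twice continuously differentiable with covariant basis vectors aᵢ(ξ) = ∂Φ/∂ξᵢ(ξ) and Jacobian J(ξ) = det DΦ(ξ), and let f : ℝ³ → ℝ³ be continuously differentiable. Then for every ξ ∈ ℝ³, ∑_{(i,j,k) cyclic} ∂/∂ξᵢ [ (a_j ×₃ a_k) ⋅ (f ∘ Φ) ](ξ) = J(ξ) · (div f)(Φ(ξ)), where the sum runs over the three cyclic permutations (i,j,k) of (1,2,3), ⋅ is the Euclidean inner product on ℝ³, ×₃ is the cross product, and div f = ∂₁f₁ + ∂₂f₂ + ∂₃f₃. No invertibility of DΦ is required. -/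
open Matrix

/-- Product rule for the scalar triple product of differentiable vector fields. -/
theorem fderiv_cross_dotProduct {E : Type*} [NormedAddCommGroup E] [NormedSpace ℝ E]
    {u v w : E → Fin 3 → ℝ} {x : E} (hu : DifferentiableAt ℝ u x)
    (hv : DifferentiableAt ℝ v x) (hw : DifferentiableAt ℝ w x) (h : E) :
    fderiv ℝ (fun y => crossProduct (u y) (v y) ⬝ᵥ w y) x h
      = crossProduct (fderiv ℝ u x h) (v x) ⬝ᵥ w x
        + crossProduct (u x) (fderiv ℝ v x h) ⬝ᵥ w x
        + crossProduct (u x) (v x) ⬝ᵥ fderiv ℝ w x h := by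
  have hu' := hasFDerivAt_pi'.1 hu.hasFDerivAt
  have hv' := hasFDerivAt_pi'.1 hv.hasFDerivAt
  have hw' := hasFDerivAt_pi'.1 hw.hasFDerivAt
  have key := (((((hu' 1).mul (hv' 2)).sub ((hu' 2).mul (hv' 1))).mul (hw' 0)).add
    ((((hu' 2).mul (hv' 0)).sub ((hu' 0).mul (hv' 2))).mul (hw' 1))).add
    ((((hu' 0).mul (hv' 1)).sub ((hu' 1).mul (hv' 0))).mul (hw' 2))
  have hfun : (fun y => crossProduct (u y) (v y) ⬝ᵥ w y) = fun y =>
      (u y 1 * v y 2 - u y 2 * v y 1) * w y 0 + (u y 2 * v y 0 - u y 0 * v y 2) * w y 1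
        + (u y 0 * v y 1 - u y 1 * v y 0) * w y 2 := by
    funext y
    simp only [cross_apply, vec3_dotProduct, cons_val]
  rw [hfun]
  refine (congrArg (fun L : E →L[ℝ] ℝ => L h) key.fderiv).trans ?_
  simp only [cross_apply, vec3_dotProduct, cons_val]
  simp
  ring

/-- The value of a linear map on `ℝ³` in terms of its values on the standard basis. -/
theorem ContinuousLinearMap.apply_fin_three (L : (Fin 3 → ℝ) →L[ℝ] (Fin 3 → ℝ))
    (v : Fin 3 → ℝ) (i : Fin 3) :
    L v i = v 0 * L (Pi.single 0 1) i + v 1 * L (Pi.single 1 1) i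
      + v 2 * L (Pi.single 2 1) i := by
  conv_lhs => rw [pi_eq_sum_univ' v]
  simp [Fin.sum_univ_three]

/-- **Conservative form of the transformed divergence.**
Let `Φ : ℝ³ → ℝ³` be C² with covariant basis vectors `aᵢ(ξ) = ∂Φ/∂ξᵢ(ξ)` (the columns
of the Jacobian matrix) and Jacobian determinant `J(ξ) = det DΦ(ξ)`, and let
`f : ℝ³ → ℝ³` be C¹. Then for every `ξ`,
`∑_{(i,j,k) cyclic} ∂/∂ξᵢ [ (a_j ×₃ a_k) ⋅ (f ∘ Φ) ](ξ) = J(ξ) · (div f)(Φ(ξ))`,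
where the cyclic permutations of `(0,1,2)` are `(0,1,2), (1,2,0), (2,0,1)`.
No invertibility of `DΦ` is required. -/
theorem cyclic_sum_deriv_cross_dot_eq_jacobian_mul_div
    (Φ : (Fin 3 → ℝ) → (Fin 3 → ℝ)) (hΦ : ContDiff ℝ 2 Φ)
    (f : (Fin 3 → ℝ) → (Fin 3 → ℝ)) (hf : ContDiff ℝ 1 f)
    (a : Fin 3 → (Fin 3 → ℝ) → (Fin 3 → ℝ))
    (ha : ∀ i ξ, a i ξ = fderiv ℝ Φ ξ (Pi.single i 1))
    (J : (Fin 3 → ℝ) → ℝ)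
    (hJ : ∀ ξ, J ξ = (Matrix.of fun r c => fderiv ℝ Φ ξ (Pi.single c 1) r).det)
    (ξ : Fin 3 → ℝ) :
    fderiv ℝ (fun x => crossProduct (a 1 x) (a 2 x) ⬝ᵥ f (Φ x)) ξ (Pi.single 0 1)
      + fderiv ℝ (fun x => crossProduct (a 2 x) (a 0 x) ⬝ᵥ f (Φ x)) ξ (Pi.single 1 1)
      + fderiv ℝ (fun x => crossProduct (a 0 x) (a 1 x) ⬝ᵥ f (Φ x)) ξ (Pi.single 2 1)
      = J ξ * ∑ i : Fin 3, fderiv ℝ (fun y => f y i) (Φ ξ) (Pi.single i 1) := by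
  obtain rfl : a = fun i x => fderiv ℝ Φ x (Pi.single i 1) := by
    funext i x
    exact ha i x
  have hD : DifferentiableAt ℝ (fderiv ℝ Φ) ξ :=
    (hΦ.fderiv_right (m := 1) (by norm_num)).differentiable (by norm_num) ξ
  have hda (i : Fin 3) : DifferentiableAt ℝ (fun x => fderiv ℝ Φ x (Pi.single i 1)) ξ :=
    hD.clm_apply (differentiableAt_const _)
  have hfd : DifferentiableAt ℝ f (Φ ξ) := hf.differentiable (by norm_num) _
  have hΦd : DifferentiableAt ℝ Φ ξ := hΦ.differentiable (by norm_num) _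
  have hfΦ : DifferentiableAt ℝ (fun x => f (Φ x)) ξ := hfd.comp ξ hΦd
  have hchain (h : Fin 3 → ℝ) :
      fderiv ℝ (fun x => f (Φ x)) ξ h = fderiv ℝ f (Φ ξ) (fderiv ℝ Φ ξ h) :=
    congrArg (fun L : (Fin 3 → ℝ) →L[ℝ] (Fin 3 → ℝ) => L h) (fderiv_comp ξ hfd hΦd)
  have hsecond (i : Fin 3) (h : Fin 3 → ℝ) :
      fderiv ℝ (fun x => fderiv ℝ Φ x (Pi.single i 1)) ξ h
        = fderiv ℝ (fderiv ℝ Φ) ξ h (Pi.single i 1) := by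
    rw [fderiv_clm_apply hD (differentiableAt_const _)]
    simp
  have hsymm : IsSymmSndFDerivAt ℝ Φ ξ := hΦ.contDiffAt.isSymmSndFDerivAt (by simp)
  have hcomp (i : Fin 3) (h : Fin 3 → ℝ) :
      fderiv ℝ (fun y => f y i) (Φ ξ) h = fderiv ℝ f (Φ ξ) h i :=
    congrArg (fun L : (Fin 3 → ℝ) →L[ℝ] ℝ => L h)
      (hasFDerivAt_pi'.1 hfd.hasFDerivAt i).fderiv
  rw [fderiv_cross_dotProduct (hda 1) (hda 2) hfΦ, fderiv_cross_dotProduct (hda 2) (hda 0) hfΦ,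
    fderiv_cross_dotProduct (hda 0) (hda 1) hfΦ, hJ]
  simp only [hchain, hsecond, hcomp, Fin.sum_univ_three, det_fin_three, of_apply,
    hsymm.eq (Pi.single 1 1) (Pi.single 0 1), hsymm.eq (Pi.single 2 1) (Pi.single 0 1),
    hsymm.eq (Pi.single 2 1) (Pi.single 1 1), cross_apply, vec3_dotProduct, cons_val]
  simp only [(fderiv ℝ f (Φ ξ)).apply_fin_three (fderiv ℝ Φ ξ _)]
  ring
end

section
/- Conservative form of the transformed gradient: let Φ : ℝ³ → ℝ³ be twice continuously differentiable with covariant basis vectors aᵢ(ξ) = ∂Φ/∂ξᵢ(ξ) and Jacobian J(ξ) = det DΦ(ξ), and let q : ℝ³ → ℝ be continuously differentiable. Then for every ξ ∈ ℝ³, ∑_{(i,j,k) cyclic} ∂/∂ξᵢ [ (a_j ×₃ a_k) · (q ∘ Φ) ](ξ) = J(ξ) • (∇q)(Φ(ξ)) as vectors in ℝ³, where the sum runs over the three cyclic permutations (i,j,k) of (1,2,3), (a_j ×₃ a_k) · (q∘Φ) denotes the vector a_j ×₃ a_k scaled by the scalar (q∘Φ)(ξ), and ∇q is the gradient of q. No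 invertibility of DΦ is required. -/
open scoped Matrix

/-- Product rule for a scalar multiple of a cross product of two vector fields. -/
theorem fderiv_smul_crossProduct_apply {E : Type*} [NormedAddCommGroup E] [NormedSpace ℝ E]
    {f : E → ℝ} {u v : E → Fin 3 → ℝ} {x : E} (hf : DifferentiableAt ℝ f x)
    (hu : DifferentiableAt ℝ u x) (hv : DifferentiableAt ℝ v x) (h : E) :
    fderiv ℝ (fun y => f y • (u y ⨯₃ v y)) x h =
      fderiv ℝ f x h • (u x ⨯₃ v x) +
        f x • (fderiv ℝ u x h ⨯₃ v x + u x ⨯₃ fderiv ℝ v x h) := by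
  have hcross := (crossProduct (R := ℝ)).toContinuousBilinearMap.hasFDerivAt_of_bilinear
    hu.hasFDerivAt hv.hasFDerivAt
  have hprod := (hf.hasFDerivAt.smul hcross).fderiv
  simp only [LinearMap.toContinuousBilinearMap_apply] at hprod
  refine (DFunLike.congr_fun hprod h).trans ?_
  simp [add_comm]

/-- If `a₀, a₁, a₂` are the columns of a matrix `A`, then
`∑ ℓ(aᵢ) (aⱼ × aₖ)`, summed over cyclic `(i, j, k)`, is `det A` times the vector representing
the linear functional `ℓ`. -/
theorem cyclic_sum_smul_crossProduct_eq_det_smul (A : Matrix (Fin 3) (Fin 3) ℝ)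
    (l : (Fin 3 → ℝ) →ₗ[ℝ] ℝ) :
    l (A.col 0) • (A.col 1 ⨯₃ A.col 2) + l (A.col 1) • (A.col 2 ⨯₃ A.col 0) +
        l (A.col 2) • (A.col 0 ⨯₃ A.col 1) = A.det • fun i => l (Pi.single i 1) := by
  have hl (w : Fin 3 → ℝ) : l w = ∑ r, w r * l (Pi.single r 1) := by
    rw [l.pi_apply_eq_sum_univ w]
    refine Finset.sum_congr rfl fun r _ => ?_
    rw [smul_eq_mul]
    congr 2
    ext j
    simp [Pi.single_apply, eq_comm]
  rw [hl (A.col 0), hl (A.col 1), hl (A.col 2), Matrix.det_fin_three]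
  ext r
  fin_cases r <;> simp [Fin.sum_univ_three, cross_apply] <;> ring

/-- The mixed partial derivatives of a `C²` map commute. -/
theorem fderiv_fderiv_apply_comm {E F : Type*} [NormedAddCommGroup E] [NormedSpace ℝ E]
    [NormedAddCommGroup F] [NormedSpace ℝ F] {f : E → F} (hf : ContDiff ℝ 2 f) (x v w : E) :
    fderiv ℝ (fun y => fderiv ℝ f y v) x w = fderiv ℝ (fun y => fderiv ℝ f y w) x v := by
  have hd : DifferentiableAt ℝ (fderiv ℝ f) x :=
    (hf.fderiv_right (m := 1) (by norm_num)).differentiable one_ne_zero x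
  have hsymm : IsSymmSndFDerivAt ℝ f x := hf.contDiffAt.isSymmSndFDerivAt (by simp)
  rw [fderiv_clm_apply hd (by fun_prop), fderiv_clm_apply hd (by fun_prop)]
  simpa using hsymm.eq w v

/-- **Conservative form of the transformed gradient.**
Let `Φ : ℝ³ → ℝ³` be C² with covariant basis vectors `aᵢ(ξ) = ∂Φ/∂ξᵢ(ξ)` (the columns
of the Jacobian matrix) and Jacobian determinant `J(ξ) = det DΦ(ξ)`, and let
`q : ℝ³ → ℝ` be C¹. Then for every `ξ`,
`∑_{(i,j,k) cyclic} ∂/∂ξᵢ [ (a_j ×₃ a_k) · (q ∘ Φ) ](ξ) = J(ξ) • (∇q)(Φ(ξ))`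
as vectors in ℝ³, where `(a_j ×₃ a_k) · (q ∘ Φ)` is the vector `a_j ×₃ a_k` scaled by
the scalar `(q ∘ Φ)(ξ)`, the outer partial derivatives are taken componentwise, and
the cyclic permutations of `(0,1,2)` are `(0,1,2), (1,2,0), (2,0,1)`.
No invertibility of `DΦ` is required. -/
theorem cyclic_sum_deriv_cross_smul_eq_jacobian_smul_grad
    (Φ : (Fin 3 → ℝ) → (Fin 3 → ℝ)) (hΦ : ContDiff ℝ 2 Φ)
    (q : (Fin 3 → ℝ) → ℝ) (hq : ContDiff ℝ 1 q)
    (a : Fin 3 → (Fin 3 → ℝ) → (Fin 3 → ℝ))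
    (ha : ∀ i ξ, a i ξ = fderiv ℝ Φ ξ (Pi.single i 1))
    (J : (Fin 3 → ℝ) → ℝ)
    (hJ : ∀ ξ, J ξ = (Matrix.of fun r c => fderiv ℝ Φ ξ (Pi.single c 1) r).det)
    (ξ : Fin 3 → ℝ) :
    fderiv ℝ (fun x => q (Φ x) • crossProduct (a 1 x) (a 2 x)) ξ (Pi.single 0 1)
      + fderiv ℝ (fun x => q (Φ x) • crossProduct (a 2 x) (a 0 x)) ξ (Pi.single 1 1)
      + fderiv ℝ (fun x => q (Φ x) • crossProduct (a 0 x) (a 1 x)) ξ (Pi.single 2 1)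
      = J ξ • fun i : Fin 3 => fderiv ℝ q (Φ ξ) (Pi.single i 1) := by
  have hd (i : Fin 3) : DifferentiableAt ℝ (a i) ξ := by
    rw [funext (ha i)]
    exact ((hΦ.fderiv_right (m := 1) (by norm_num)).clm_apply contDiff_const).differentiable
      one_ne_zero ξ
  have hcomm (i j : Fin 3) :
      fderiv ℝ (a i) ξ (Pi.single j 1) = fderiv ℝ (a j) ξ (Pi.single i 1) := by
    rw [funext (ha i), funext (ha j)]
    exact fderiv_fderiv_apply_comm hΦ ξ _ _
  have hΦd : DifferentiableAt ℝ Φ ξ := hΦ.differentiable two_ne_zero ξ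
  have hqd : DifferentiableAt ℝ q (Φ ξ) := hq.differentiable one_ne_zero _
  have hqΦ : DifferentiableAt ℝ (fun x => q (Φ x)) ξ := hqd.comp ξ hΦd
  have hchain (i : Fin 3) :
      fderiv ℝ (fun x => q (Φ x)) ξ (Pi.single i 1) = fderiv ℝ q (Φ ξ) (a i ξ) := by
    rw [ha, ← ContinuousLinearMap.comp_apply, ← fderiv_comp ξ hqd hΦd]
    rfl
  have hcol (i : Fin 3) :
      (Matrix.of fun r c => fderiv ℝ Φ ξ (Pi.single c 1) r).col i = a i ξ := (ha i ξ).symm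
  have hdet := cyclic_sum_smul_crossProduct_eq_det_smul
    (Matrix.of fun r c => fderiv ℝ Φ ξ (Pi.single c 1) r) (fderiv ℝ q (Φ ξ)).toLinearMap
  simp only [hcol, ← hJ, ContinuousLinearMap.coe_coe] at hdet
  rw [← hdet, fderiv_smul_crossProduct_apply hqΦ (hd 1) (hd 2),
    fderiv_smul_crossProduct_apply hqΦ (hd 2) (hd 0),
    fderiv_smul_crossProduct_apply hqΦ (hd 0) (hd 1), hchain, hchain, hchain,
    hcomm 1 0, hcomm 2 0, hcomm 2 1,
    ← cross_anticomm (a 1 ξ) (fderiv ℝ (a 0) ξ (Pi.single 2 1)),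
    ← cross_anticomm (a 2 ξ) (fderiv ℝ (a 0) ξ (Pi.single 1 1)),
    ← cross_anticomm (a 0 ξ) (fderiv ℝ (a 1) ξ (Pi.single 2 1))]
  module
end
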